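/- arXiv:1301.0138 — 2 statements merged into one kernel-verified Lean document; each statement's English description precedes it below -/
import Mathlib

section
/- For every integer m ≥ 1, the identity −X_m(x,y)² − x²·X_m(x,y) − 2x² + 2 = y − (y+2)·\tilde{R}_m(x,y)·\tilde{R}_{m−1}(x,y) holds in ℂ[x,y]. -/
open Polynomial

/-- The Chebyshev-like polynomials `S n ∈ R[X]` defined by `S 0 = 1`, `S 1 = X` and
`S (n+1) = X * S n - S (n-1)` for all `n : ℤ`. -/
noncomputable def S (R : Type*) [CommRing R] : ℤ → R[X]
  | 0 => 1
  | 1 => X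
  | (n : ℕ) + 2 => X * S R (n + 1) - S R n
  | -((n : ℕ) + 1) => X * S R (-n) - S R (-n + 1)
  termination_by n => Int.natAbs n + Int.natAbs (n - 1)

/-- The variable `x` of `ℂ[x,y]`, realized as `MvPolynomial (Fin 2) ℂ`. -/
noncomputable def xP : MvPolynomial (Fin 2) ℂ := MvPolynomial.X 0

/-- The variable `y` of `ℂ[x,y]`. -/
noncomputable def yP : MvPolynomial (Fin 2) ℂ := MvPolynomial.X 1

/-- The polynomials `X_m ∈ ℂ[x,y]` defined by `X_0 = -2`, `X_1 = -x^2 - y` and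
`X_{m+1} = y * X_m - X_{m-1} - 2x^2` for all `m : ℤ`. -/
noncomputable def Xp : ℤ → MvPolynomial (Fin 2) ℂ
  | 0 => -2
  | 1 => -(MvPolynomial.X 0) ^ 2 - MvPolynomial.X 1
  | (m : ℕ) + 2 => MvPolynomial.X 1 * Xp (m + 1) - Xp m - 2 * (MvPolynomial.X 0) ^ 2
  | -((m : ℕ) + 1) => MvPolynomial.X 1 * Xp (-m) - Xp (-m + 1) - 2 * (MvPolynomial.X 0) ^ 2
  termination_by m => Int.natAbs m + Int.natAbs (m - 1)

/-- The polynomial `R̃_m(x,y) = S_m(y) - S_{m-1}(y) + x^2 * ∑_{i=0}^{m-1} S_i(y)`. -/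
noncomputable def Rt (m : ℕ) : MvPolynomial (Fin 2) ℂ :=
  aeval yP (S ℂ (m : ℤ)) - aeval yP (S ℂ ((m : ℤ) - 1))
    + xP ^ 2 * ∑ i ∈ Finset.range m, aeval yP (S ℂ (i : ℤ))

theorem S_zero (R : Type*) [CommRing R] : S R 0 = 1 := by rw [S]

theorem S_one (R : Type*) [CommRing R] : S R 1 = X := by rw [S]

theorem S_neg_one (R : Type*) [CommRing R] : S R (-1) = 0 := by
  have h := S.eq_4 R 0
  simpa [S_zero, S_one] using h

theorem S_natCast_add_two (R : Type*) [CommRing R] (n : ℕ) :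
    S R ((n : ℤ) + 2) = X * S R (n + 1) - S R n :=
  S.eq_3 R n

theorem S_natCast_add_one (R : Type*) [CommRing R] (n : ℕ) :
    S R ((n : ℤ) + 1) = X * S R n - S R ((n : ℤ) - 1) := by
  cases n with
  | zero =>
    simp [S_zero, S_one, S_neg_one]
  | succ k =>
    have h := S_natCast_add_two R k
    push_cast
    rw [add_assoc, one_add_one_eq_two, h, add_sub_cancel_right]

theorem sum_aeval_S_add_two (n : ℕ) :
    ∑ i ∈ Finset.range (n + 2), aeval yP (S ℂ (i : ℤ)) =
      yP * ∑ i ∈ Finset.range (n + 1), aeval yP (S ℂ (i : ℤ))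
        - ∑ i ∈ Finset.range n, aeval yP (S ℂ (i : ℤ)) + 1 := by
  induction n with
  | zero =>
    simp [Finset.sum_range_succ, S_zero, S_one, add_comm]
  | succ k ih =>
    have h := congrArg (aeval yP) (S_natCast_add_two ℂ k)
    simp only [map_sub, map_mul, aeval_X] at h
    have e (j : ℕ) := Finset.sum_range_succ (fun i : ℕ => aeval yP (S ℂ (i : ℤ))) j
    have e₁ := e (k + 1)
    have e₂ := e (k + 2)
    push_cast at e₁ e₂
    linear_combination ih + e₂ - yP * e₁ + e k + h

theorem Rt_zero : Rt 0 = 1 := by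
  simp [Rt, S_zero, S_neg_one]

theorem Rt_one : Rt 1 = yP - 1 + xP ^ 2 := by
  simp [Rt, S_zero, S_one]

theorem Rt_add_two (n : ℕ) : Rt (n + 2) = yP * Rt (n + 1) - Rt n + xP ^ 2 := by
  have h2 := congrArg (aeval yP) (S_natCast_add_two ℂ n)
  have h1 := congrArg (aeval yP) (S_natCast_add_one ℂ n)
  simp only [map_sub, map_mul, aeval_X] at h1 h2
  have e : (n : ℤ) + 2 - 1 = n + 1 := by ring
  simp only [Rt, sum_aeval_S_add_two]
  push_cast
  rw [e, add_sub_cancel_right]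
  linear_combination h2 - h1

theorem Xp_add_one (n : ℕ) : Xp ((n : ℤ) + 1) = -(Rt (n + 1) + Rt n) := by
  have h0 : Xp 0 = -2 := by rw [Xp]
  have h1 : Xp 1 = -xP ^ 2 - yP := by rw [Xp, xP, yP]
  have hX (k : ℕ) : Xp ((k : ℤ) + 2) = yP * Xp (k + 1) - Xp k - 2 * xP ^ 2 := Xp.eq_3 k
  induction n using Nat.twoStepInduction with
  | zero =>
    simp only [Nat.cast_zero, zero_add, h1, Rt_zero, Rt_one]
    ring
  | one =>
    have h := hX 0
    simp only [Nat.cast_zero, zero_add, h0, h1] at h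
    norm_num [h, Rt_add_two 0, Rt_zero, Rt_one]
    ring
  | more k ih₀ ih₁ =>
    have h := hX (k + 1)
    push_cast at h ih₁ ⊢
    rw [show (k : ℤ) + 2 + 1 = k + 1 + 2 by ring, h, ih₁, ih₀, Rt_add_two (k + 1), Rt_add_two k]
    ring

/-- The quadratic invariant of the recurrence satisfied by `Rt`. -/
theorem Rt_quadratic_invariant (n : ℕ) :
    Rt (n + 1) ^ 2 + Rt n ^ 2 - yP * Rt (n + 1) * Rt n - xP ^ 2 * (Rt (n + 1) + Rt n) =
      2 - yP - 2 * xP ^ 2 := by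
  induction n with
  | zero =>
    rw [Rt_one, Rt_zero]
    ring
  | succ k ih =>
    rw [Rt_add_two]
    linear_combination ih

/-- `-X_m^2 - x^2 X_m - 2x^2 + 2 = y - (y+2) R̃_m R̃_{m-1}` for every integer `m ≥ 1`. -/
theorem neg_Xp_sq (m : ℕ) (hm : 1 ≤ m) :
    -Xp (m : ℤ) ^ 2 - xP ^ 2 * Xp (m : ℤ) - 2 * xP ^ 2 + 2 =
      yP - (yP + 2) * Rt m * Rt (m - 1) := by
  obtain ⟨n, rfl⟩ := Nat.exists_eq_add_of_le' hm
  rw [Nat.add_sub_cancel]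
  push_cast
  rw [Xp_add_one]
  linear_combination -Rt_quadratic_invariant n
end

section
/- For every integer n, the identity −X_{2n}(−x,−t) − y = (y−2)·(S_n(t) + (y+1−x²)·S_{n−1}(t))·((y+1−x²)·S_{n−1}(t) + S_{n−2}(t)) holds in ℂ[x,y], where t = y² − y·x² + 2x² − 2. -/
open Polynomial

/-- The polynomial `t(x,y) = y^2 - y x^2 + 2 x^2 - 2 ∈ ℂ[x,y]`. -/
noncomputable def tP : MvPolynomial (Fin 2) ℂ := yP ^ 2 - yP * xP ^ 2 + 2 * xP ^ 2 - 2

/-- The substitution homomorphism of `ℂ[x,y]` sending `x ↦ -x` and `y ↦ -t(x,y)`. -/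
noncomputable def φ : MvPolynomial (Fin 2) ℂ →ₐ[ℂ] MvPolynomial (Fin 2) ℂ :=
  MvPolynomial.aeval ![-xP, -tP]

theorem S_add_two (R : Type*) [CommRing R] : ∀ n : ℤ, S R (n + 2) = X * S R (n + 1) - S R n
  | (k : ℕ) => S.eq_3 R k
  | -(k + 1 : ℕ) => by linear_combination (norm := (simp [Int.negSucc_eq]; ring_nf)) S.eq_4 R k

theorem Xp_add_two : ∀ m : ℤ, Xp (m + 2) = yP * Xp (m + 1) - Xp m - 2 * xP ^ 2
  | (k : ℕ) => Xp.eq_3 k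
  | -(k + 1 : ℕ) => by
    linear_combination (norm := (simp [Int.negSucc_eq, xP, yP]; ring_nf)) Xp.eq_4 k

theorem φ_Xp_add_two (m : ℤ) :
    φ (Xp (m + 2)) = -tP * φ (Xp (m + 1)) - φ (Xp m) - 2 * xP ^ 2 := by
  have h_two : φ 2 = 2 := map_ofNat φ 2
  have h_x : φ xP = -xP := by simp [φ, xP]
  have h_y : φ yP = -tP := by simp [φ, yP]
  simp [Xp_add_two, h_two, h_x, h_y]

theorem aeval_S_add_two {R A : Type*} [CommRing R] [CommRing A] [Algebra R A] (a : A) (n : ℤ) :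
    aeval a (S R (n + 2)) = a * aeval a (S R (n + 1)) - aeval a (S R n) := by
  simp [S_add_two]

theorem aeval_S_sq_add_sq {R A : Type*} [CommRing R] [CommRing A] [Algebra R A] (a : A) (n : ℤ) :
    aeval a (S R (n + 1)) ^ 2 + aeval a (S R n) ^ 2
      - a * aeval a (S R (n + 1)) * aeval a (S R n) = 1 := by
  induction n with
  | zero => simp [S]; ring
  | succ n ih =>
    rw [add_assoc (n : ℤ) 1 1, one_add_one_eq_two, aeval_S_add_two]
    linear_combination ih
  | pred n ih =>
    have h := aeval_S_add_two (R := R) a (-n - 1)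
    rw [show (-n - 1 + 2 : ℤ) = -n + 1 by ring, sub_add_cancel] at h
    rw [h] at ih
    rw [sub_add_cancel]
    linear_combination ih

/-- The values of `φ (Xp m)` at consecutive indices as quadratic forms in consecutive values of
`S` at `t`. -/
theorem φ_Xp_two_mul_and_succ (n : ℤ) :
    φ (Xp (2 * n)) =
        (tP * xP ^ 2 - tP ^ 2 + 2 - 2 * xP ^ 2) * aeval tP (S ℂ (n - 1)) ^ 2
          + 2 * tP * aeval tP (S ℂ (n - 1)) * aeval tP (S ℂ (n - 2))
          - 2 * aeval tP (S ℂ (n - 2)) ^ 2 ∧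
      φ (Xp (2 * n + 1)) =
        (tP ^ 3 - 3 * tP - xP ^ 2 * (tP - 1) ^ 2) * aeval tP (S ℂ (n - 1)) ^ 2
          + (4 - 2 * tP ^ 2 + 2 * xP ^ 2 * tP - 2 * xP ^ 2)
            * aeval tP (S ℂ (n - 1)) * aeval tP (S ℂ (n - 2))
          + (tP - xP ^ 2) * aeval tP (S ℂ (n - 2)) ^ 2 := by
  induction n with
  | zero =>
    have h₁ : S ℂ (-1) = 0 := by
      have := S_add_two ℂ (-1)
      norm_num [S] at this
      linear_combination this
    have h₂ : S ℂ (-2) = -1 := by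
      have := S_add_two ℂ (-2)
      norm_num [h₁] at this
      simp [S] at this
      linear_combination this
    constructor
    · have h_two : φ 2 = 2 := map_ofNat φ 2
      simp [h₁, h₂, Xp, h_two]
    · simp [h₁, h₂, Xp, φ, xP]
      ring
  | succ n ih =>
    obtain ⟨ih₀, ih₁⟩ := ih
    have hS := aeval_S_add_two (R := ℂ) tP (n - 2)
    have hq := aeval_S_sq_add_sq (R := ℂ) tP (n - 2)
    have h₂ := φ_Xp_add_two (2 * n)
    have h₃ := φ_Xp_add_two (2 * n + 1)
    rw [show (n - 2 + 1 : ℤ) = n - 1 by ring] at hS hq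
    rw [sub_add_cancel] at hS
    rw [show (2 * n + 1 + 2 : ℤ) = 2 * n + 2 + 1 by ring,
      show (2 * n + 1 + 1 : ℤ) = 2 * n + 2 by ring] at h₃
    rw [show (2 * (n + 1) : ℤ) = 2 * n + 2 by ring, add_sub_cancel_right,
      show (n + 1 - 2 : ℤ) = n - 1 by ring, h₃, h₂, ih₀, ih₁, hS]
    constructor
    · linear_combination 2 * xP ^ 2 * hq
    · linear_combination (2 * xP ^ 2 - 2 * xP ^ 2 * tP) * hq
  | pred n ih =>
    obtain ⟨ih₀, ih₁⟩ := ih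
    have hS := aeval_S_add_two (R := ℂ) tP (-n - 3)
    have hq := aeval_S_sq_add_sq (R := ℂ) tP (-n - 3)
    have h₂ := φ_Xp_add_two (2 * -n - 2)
    have h₃ := φ_Xp_add_two (2 * -n - 1)
    rw [show (-n - 3 + 1 : ℤ) = -n - 2 by ring] at hS hq
    rw [show (-n - 3 + 2 : ℤ) = -n - 1 by ring] at hS
    rw [sub_add_cancel, show (2 * -n - 2 + 1 : ℤ) = 2 * -n - 1 by ring] at h₂
    rw [sub_add_cancel, show (2 * -n - 1 + 2 : ℤ) = 2 * -n + 1 by ring] at h₃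
    rw [hS] at ih₀ ih₁
    rw [show (2 * (-n - 1) : ℤ) = 2 * -n - 2 by ring,
      show (2 * -n - 2 + 1 : ℤ) = 2 * -n - 1 by ring,
      show (-n - 1 - 1 : ℤ) = -n - 2 by ring, show (-n - 1 - 2 : ℤ) = -n - 3 by ring]
    constructor
    · linear_combination h₂ - tP * h₃ - ih₀ + tP ^ 2 * ih₀ + tP * ih₁
        + (2 * xP ^ 2 - 2 * xP ^ 2 * tP) * hq
    · linear_combination h₃ - tP * ih₀ - ih₁ + 2 * xP ^ 2 * hq

/-- `-X_{2n}(-x,-t) - y = (y-2) (S_n(t) + (y+1-x^2) S_{n-1}(t)) ((y+1-x^2) S_{n-1}(t) + S_{n-2}(t))`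
for every integer `n`, where `t = y^2 - y x^2 + 2x^2 - 2`. -/
theorem Xp_even_substitution (n : ℤ) :
    -φ (Xp (2 * n)) - yP =
      (yP - 2) * (aeval tP (S ℂ n) + (yP + 1 - xP ^ 2) * aeval tP (S ℂ (n - 1)))
        * ((yP + 1 - xP ^ 2) * aeval tP (S ℂ (n - 1)) + aeval tP (S ℂ (n - 2))) := by
  obtain ⟨h, -⟩ := φ_Xp_two_mul_and_succ n
  have hS := aeval_S_add_two (R := ℂ) tP (n - 2)
  have hq := aeval_S_sq_add_sq (R := ℂ) tP (n - 2)
  rw [show n - 2 + 2 = n by ring, show n - 2 + 1 = n - 1 by ring] at hS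
  rw [show n - 2 + 1 = n - 1 by ring] at hq
  rw [h, hS]
  generalize aeval tP (S ℂ (n - 1)) = u at hq ⊢
  generalize aeval tP (S ℂ (n - 2)) = v at hq ⊢
  rw [tP] at hq ⊢
  linear_combination yP * hq
end
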